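/- For every real number M ≥ 0, there exist a finite simple graph G and a positive integer k such that ϑ_k(G) − ϑ(K_k □ G) ≥ M, where K_k □ G is the Cartesian product of the complete graph K_k with G. -/

import Mathlib

open Finset

/-- The sum of the `k` largest eigenvalues (counted with multiplicity) of a
Hermitian real matrix, realized as the supremum over all choices of
`min k n` eigenvalues of their sum. -/
noncomputable def sumKEig {V : Type*} [Fintype V] [DecidableEq V] (k : ℕ)
    (A : Matrix V V ℝ) (hA : A.IsHermitian) : ℝ :=
  sSup {x : ℝ | ∃ s : Finset V, s.card = min k (Fintype.card V) ∧
    x = ∑ i ∈ s, hA.eigenvalues i}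

/-- The generalized theta number `ϑ_k(G)`: the infimum of the sum of the `k`
largest eigenvalues over all real symmetric matrices `A` with `A i j = 1`
whenever `(i,j)` is not an edge of `G`. -/
noncomputable def gtheta {V : Type*} [Fintype V] [DecidableEq V]
    (k : ℕ) (G : SimpleGraph V) : ℝ :=
  sInf {x : ℝ | ∃ (A : Matrix V V ℝ) (hA : A.IsHermitian),
    (∀ i j, ¬ G.Adj i j → A i j = 1) ∧ x = sumKEig k A hA}

/-!
For *every* graph `G` on `n` vertices, the matrix `Y = (J + L_G) / n`, with `L_G` the Laplacian and
`J` the all-ones matrix, vanishes on the edges of `G` and satisfies `0 ≤ Y ≤ 1`, because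
`1 - Y = L_{Gᶜ} / n`. By Ky Fan's inequality it is a dual certificate for `ϑ_k(G) ≥ n` as soon as
`k = tr Y` is one plus the average degree of `G`.

A clique on `a` vertices together with isolated vertices, `n = a (a - 1)` in total, has average
degree one, so `ϑ_2(G) ≥ n`. But `K_2 □ G` is covered by two cliques of size `a` and `n - a` edges,
so `ϑ(K_2 □ G) ≤ n - a + 2`, and the gap is at least `a - 2`.
-/

open Matrix

section KyFan

variable {V : Type*} [Fintype V]

theorem exists_card_eq_forall_mem_le_forall_notMem_le {R : Type*} [LinearOrder R] [Nonempty R]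
    (l : V → R) {k : ℕ} (hk : k ≤ Fintype.card V) :
    ∃ (s : Finset V) (c : R), #s = k ∧ (∀ i ∈ s, c ≤ l i) ∧ ∀ i ∉ s, l i ≤ c := by
  classical
  induction k with
  | zero =>
    obtain ⟨c, hc⟩ := Finite.bddAbove_range l
    exact ⟨∅, c, card_empty, by simp, fun i _ ↦ hc ⟨i, rfl⟩⟩
  | succ k ih =>
    obtain ⟨s, c, hs, hmem, hnotMem⟩ := ih (by lia)
    have hne : sᶜ.Nonempty := by
      rw [← card_pos, card_compl]
      lia
    obtain ⟨m, hm, hmax⟩ := exists_max_image sᶜ l hne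
    rw [mem_compl] at hm
    refine ⟨insert m s, l m, by rw [card_insert_of_notMem hm, hs], fun i hi ↦ ?_, fun i hi ↦ ?_⟩
    · obtain rfl | hi := mem_insert.1 hi
      · exact le_rfl
      · exact (hnotMem m hm).trans (hmem i hi)
    · exact hmax i (mem_compl.2 fun his ↦ hi (mem_insert_of_mem his))

theorem exists_card_eq_sum_mul_le_sum (l y : V → ℝ) {k : ℕ} (hy0 : ∀ i, 0 ≤ y i)
    (hy1 : ∀ i, y i ≤ 1) (hsum : ∑ i, y i = k) :
    ∃ s : Finset V, #s = k ∧ ∑ i, l i * y i ≤ ∑ i ∈ s, l i := by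
  classical
  have hk : k ≤ Fintype.card V := by
    have : (k : ℝ) ≤ ∑ _i : V, 1 := hsum ▸ sum_le_sum fun i _ ↦ hy1 i
    simpa using this
  obtain ⟨s, c, hs, hmem, hnotMem⟩ := exists_card_eq_forall_mem_le_forall_notMem_le l hk
  refine ⟨s, hs, ?_⟩
  have hterm (i : V) : (l i - c) * y i ≤ if i ∈ s then l i - c else 0 := by
    split_ifs with hi
    · exact mul_le_of_le_one_right (sub_nonneg.2 (hmem i hi)) (hy1 i)
    · exact mul_nonpos_of_nonpos_of_nonneg (sub_nonpos.2 (hnotMem i hi)) (hy0 i)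
  calc ∑ i, l i * y i = ∑ i, (l i - c) * y i + k * c := by
        simp only [sub_mul, sum_sub_distrib, ← mul_sum, hsum]
        ring
    _ ≤ (∑ i, if i ∈ s then l i - c else 0) + k * c := by gcongr with i; exact hterm i
    _ = ∑ i ∈ s, l i := by simp [hs]

variable [DecidableEq V]

theorem sum_eigenvalues_le_sumKEig {A : Matrix V V ℝ} (hA : A.IsHermitian) {k : ℕ} {s : Finset V}
    (hs : #s = min k (Fintype.card V)) : ∑ i ∈ s, hA.eigenvalues i ≤ sumKEig k A hA := by
  refine le_csSup (Set.Finite.bddAbove ?_) ⟨s, hs, rfl⟩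
  refine (Set.finite_range fun s : Finset V ↦ ∑ i ∈ s, hA.eigenvalues i).subset ?_
  rintro _ ⟨s, -, rfl⟩
  exact ⟨s, rfl⟩

theorem trace_mul_eq_sum_eigenvalues_mul {A : Matrix V V ℝ} (hA : A.IsHermitian)
    (Y : Matrix V V ℝ) :
    (A * Y).trace = ∑ i, hA.eigenvalues i *
      ((hA.eigenvectorUnitary : Matrix V V ℝ)ᴴ * Y * hA.eigenvectorUnitary) i i := by
  set U : Matrix V V ℝ := ↑hA.eigenvectorUnitary
  have hspec : A = U * diagonal hA.eigenvalues * Uᴴ := hA.spectral_theorem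
  calc (A * Y).trace = (U * (diagonal hA.eigenvalues * Uᴴ * Y)).trace := by
        conv_lhs => rw [hspec]
        simp only [Matrix.mul_assoc]
    _ = (diagonal hA.eigenvalues * (Uᴴ * Y * U)).trace := by
        rw [trace_mul_comm]
        simp only [Matrix.mul_assoc]
    _ = _ := by simp [trace, diagonal_mul]

theorem trace_mul_le_sumKEig {A Y : Matrix V V ℝ} (hA : A.IsHermitian) {k : ℕ}
    (hY : Y.PosSemidef) (hY1 : (1 - Y).PosSemidef) (htrace : Y.trace = k) :
    (A * Y).trace ≤ sumKEig k A hA := by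
  set U : Matrix V V ℝ := ↑hA.eigenvectorUnitary
  have hUU : Uᴴ * U = 1 := mem_unitaryGroup_iff'.1 hA.eigenvectorUnitary.2
  have hnonneg (i : V) : 0 ≤ (Uᴴ * Y * U) i i := (hY.conjTranspose_mul_mul_same U).diag_nonneg
  have hle_one (i : V) : (Uᴴ * Y * U) i i ≤ 1 := by
    have := (hY1.conjTranspose_mul_mul_same U).diag_nonneg (i := i)
    rwa [Matrix.mul_sub, Matrix.sub_mul, Matrix.mul_one, hUU, Matrix.sub_apply, one_apply_eq,
      sub_nonneg] at this
  have hsum : ∑ i, (Uᴴ * Y * U) i i = k := by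
    change (Uᴴ * Y * U).trace = k
    rw [trace_mul_comm, ← Matrix.mul_assoc, mul_eq_one_comm.1 hUU, Matrix.one_mul, htrace]
  obtain ⟨s, hs, hle⟩ := exists_card_eq_sum_mul_le_sum hA.eigenvalues _ hnonneg hle_one hsum
  rw [trace_mul_eq_sum_eigenvalues_mul hA]
  refine hle.trans (sum_eigenvalues_le_sumKEig hA ?_)
  rw [hs, min_eq_left (hs ▸ card_le_univ s)]

theorem sum_diag_le_sumKEig {A : Matrix V V ℝ} (hA : A.IsHermitian) (s : Finset V) :
    ∑ i ∈ s, A i i ≤ sumKEig #s A hA := by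
  let y : V → ℝ := fun i ↦ if i ∈ s then 1 else 0
  have hy : (diagonal y).PosSemidef := .diagonal fun i ↦ by
    by_cases hi : i ∈ s <;> simp [y, hi]
  have hy1 : (1 - diagonal y).PosSemidef := by
    rw [← diagonal_one, diagonal_sub]
    exact .diagonal fun i ↦ by by_cases hi : i ∈ s <;> simp [y, hi]
  have htrace : (diagonal y).trace = #s := by simp [y]
  simpa [trace, y] using trace_mul_le_sumKEig hA hy hy1 htrace

theorem eigenvalues_le_of_posSemidef_smul_one_sub {A : Matrix V V ℝ} (hA : A.IsHermitian) {c : ℝ}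
    (hAc : (c • 1 - A).PosSemidef) (i : V) : hA.eigenvalues i ≤ c := by
  set v : V → ℝ := ⇑(hA.eigenvectorBasis i)
  have hv : star v ⬝ᵥ v = 1 := by
    rw [dotProduct_comm, ← EuclideanSpace.inner_eq_star_dotProduct]
    simp
  have := hAc.dotProduct_mulVec_nonneg v
  rw [sub_mulVec, smul_mulVec, one_mulVec, dotProduct_sub, dotProduct_smul, hv, smul_eq_mul,
    mul_one] at this
  rw [hA.eigenvalues_eq]
  exact sub_nonneg.1 this

theorem sumKEig_le_mul {A : Matrix V V ℝ} (hA : A.IsHermitian) {c : ℝ} (hc : 0 ≤ c)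
    (hAc : (c • 1 - A).PosSemidef) (k : ℕ) : sumKEig k A hA ≤ k * c := by
  refine Real.sSup_le ?_ (by positivity)
  rintro _ ⟨s, hs, rfl⟩
  calc ∑ i ∈ s, hA.eigenvalues i ≤ #s • c :=
        sum_le_card_nsmul _ _ _ fun i _ ↦ eigenvalues_le_of_posSemidef_smul_one_sub hA hAc i
    _ ≤ k * c := by
        rw [nsmul_eq_mul]
        gcongr
        exact hs.trans_le (min_le_left _ _)

end KyFan

section Laplacian

variable {V : Type*} [Fintype V] [DecidableEq V]

theorem lapMatrix_add_lapMatrix_compl (G : SimpleGraph V) [DecidableRel G.Adj] :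
    G.lapMatrix ℝ + Gᶜ.lapMatrix ℝ = (Fintype.card V : ℝ) • 1 - of 1 := by
  ext i j
  obtain rfl | hij := eq_or_ne i j
  · have hdeg : (G.degree i : ℝ) + Gᶜ.degree i = Fintype.card V - 1 := by
      have := G.degree_lt_card_verts i
      rw [eq_sub_iff_add_eq, G.degree_compl i]
      norm_cast
      lia
    simpa [SimpleGraph.lapMatrix, SimpleGraph.degMatrix] using hdeg
  · by_cases hadj : G.Adj i j <;>
      simp [SimpleGraph.lapMatrix, SimpleGraph.degMatrix, hij, hadj]

theorem posSemidef_card_smul_one_sub_of_one (α : Type*) [Fintype α] [DecidableEq α] :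
    ((Fintype.card α : ℝ) • 1 - of 1 : Matrix α α ℝ).PosSemidef := by
  rw [← lapMatrix_add_lapMatrix_compl ⊥]
  exact (SimpleGraph.posSemidef_lapMatrix ℝ _).add (SimpleGraph.posSemidef_lapMatrix ℝ _)

theorem posSemidef_of_one (α : Type*) [Finite α] : (of 1 : Matrix α α ℝ).PosSemidef := by
  convert posSemidef_vecMulVec_self_star (1 : α → ℝ)
  ext
  simp [vecMulVec_apply]

theorem trace_lapMatrix (G : SimpleGraph V) [DecidableRel G.Adj] :
    (G.lapMatrix ℝ).trace = 2 * #G.edgeFinset := by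
  have := G.sum_degrees_eq_twice_card_edges
  rw [SimpleGraph.lapMatrix, trace_sub, SimpleGraph.trace_adjMatrix, sub_zero,
    SimpleGraph.degMatrix, trace_diagonal]
  exact_mod_cast this

theorem sum_sum_lapMatrix (G : SimpleGraph V) [DecidableRel G.Adj] :
    ∑ i, ∑ j, G.lapMatrix ℝ i j = 0 := by
  refine sum_eq_zero fun i _ ↦ ?_
  simpa [mulVec, dotProduct] using congrFun (G.lapMatrix_mulVec_const_eq_zero (R := ℝ)) i

end Laplacian

section Theta

variable {V : Type*} [Fintype V] [DecidableEq V] {G : SimpleGraph V}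

theorem gtheta_le_sumKEig {A : Matrix V V ℝ} (hA : A.IsHermitian)
    (hAG : ∀ i j, ¬ G.Adj i j → A i j = 1) (k : ℕ) : gtheta k G ≤ sumKEig k A hA := by
  refine csInf_le ⟨0, ?_⟩ ⟨A, hA, hAG, rfl⟩
  rintro _ ⟨B, hB, hBG, rfl⟩
  obtain ⟨s, -, hs⟩ := exists_subset_card_eq (s := (univ : Finset V)) (min_le_right k _)
  calc (0 : ℝ) ≤ ∑ i ∈ s, B i i := sum_nonneg fun i _ ↦ by simp [hBG i i G.irrefl]
    _ ≤ sumKEig #s B hB := sum_diag_le_sumKEig hB s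
    _ = sumKEig k B hB := by simp [sumKEig, hs]

theorem sum_sum_le_gtheta {Y : Matrix V V ℝ} {k : ℕ} (hY : Y.PosSemidef)
    (hY1 : (1 - Y).PosSemidef) (htrace : Y.trace = k) (hYG : ∀ i j, G.Adj i j → Y i j = 0) :
    ∑ i, ∑ j, Y i j ≤ gtheta k G := by
  refine le_csInf ⟨_, of 1, ?_, fun _ _ _ ↦ rfl, rfl⟩ ?_
  · exact (posSemidef_of_one V).isHermitian
  rintro _ ⟨A, hA, hAG, rfl⟩
  calc ∑ i, ∑ j, Y i j = (A * Y).trace := by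
        simp only [trace, Matrix.diag_apply, mul_apply]
        refine sum_congr rfl fun i _ ↦ sum_congr rfl fun j _ ↦ ?_
        rw [← hY.isHermitian.apply j i, star_trivial]
        by_cases hij : G.Adj i j
        · rw [hYG i j hij, mul_zero]
        · rw [hAG i j hij, one_mul]
    _ ≤ sumKEig k A hA := trace_mul_le_sumKEig hA hY hY1 htrace

theorem card_le_gtheta [Nonempty V] [DecidableRel G.Adj] {k : ℕ}
    (hk : k * Fintype.card V = Fintype.card V + 2 * #G.edgeFinset) :
    (Fintype.card V : ℝ) ≤ gtheta k G := by
  let n : ℝ := Fintype.card V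
  have hn0 : n ≠ 0 := Nat.cast_ne_zero.2 Fintype.card_ne_zero
  have hkn : k * n = n + 2 * #G.edgeFinset := by
    simp only [n]
    exact_mod_cast hk
  let Y : Matrix V V ℝ := n⁻¹ • (of 1 + G.lapMatrix ℝ)
  have hY : Y.PosSemidef :=
    ((posSemidef_of_one V).add (G.posSemidef_lapMatrix ℝ)).smul (by positivity)
  have hY1 : (1 - Y).PosSemidef := by
    have hsub : 1 - Y = n⁻¹ • Gᶜ.lapMatrix ℝ := by
      rw [eq_sub_of_add_eq' (lapMatrix_add_lapMatrix_compl G), smul_sub, smul_sub,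
        inv_smul_smul₀ hn0, sub_sub, ← smul_add]
    exact hsub ▸ (Gᶜ.posSemidef_lapMatrix ℝ).smul (by positivity)
  have htrace : Y.trace = k := by
    have : (of 1 : Matrix V V ℝ).trace = n := by simp [trace, n]
    rw [trace_smul, trace_add, trace_lapMatrix, this, ← hkn, smul_eq_mul]
    field_simp
  have hYG (i j : V) (hij : G.Adj i j) : Y i j = 0 := by
    simp [Y, SimpleGraph.lapMatrix, SimpleGraph.degMatrix, hij, hij.ne]
  calc n = ∑ i, ∑ j, Y i j := by simp [Y, n, ← mul_sum, sum_add_distrib, sum_sum_lapMatrix]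
    _ ≤ gtheta k G := sum_sum_le_gtheta hY hY1 htrace hYG

theorem gtheta_le_mul_card_of_compl_coloring {α : Type*} [Fintype α] (f : Gᶜ.Coloring α) (k : ℕ) :
    gtheta k G ≤ k * Fintype.card α := by
  classical
  -- `L` is the Laplacian of the complete graph on the colours, pulled back along `f`.
  let L : Matrix V V ℝ := ((Fintype.card α : ℝ) • 1 - of 1 : Matrix α α ℝ).submatrix f f
  have hL : L.PosSemidef := (posSemidef_card_smul_one_sub_of_one α).submatrix f
  let A : Matrix V V ℝ := (Fintype.card α : ℝ) • 1 - L
  have hA : A.IsHermitian := (isHermitian_one.smul (.all _)).sub hL.isHermitian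
  have hAG (i j : V) (hij : ¬ G.Adj i j) : A i j = 1 := by
    obtain rfl | hne := eq_or_ne i j
    · simp [A, L]
    · have hcol : f i ≠ f j := f.valid ⟨hne, hij⟩
      simp [A, L, hne, hcol]
  calc gtheta k G ≤ sumKEig k A hA := gtheta_le_sumKEig hA hAG k
    _ ≤ k * Fintype.card α := sumKEig_le_mul hA (by positivity) (by simpa [A] using hL) k

end Theta

section BoxProd

variable {V α : Type*} {G : SimpleGraph V} {C : Finset V}

/-- The cover of `K_α □ G` by the `|α|` copies of a clique `C` of `G` and the copies of `K_α` over
the remaining vertices of `G`, as a colouring of the complement. -/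
def boxProdTopComplColoring [DecidableEq V] (hC : G.IsClique C) :
    (((⊤ : SimpleGraph α) □ G)ᶜ).Coloring (α ⊕ {i // i ∉ C}) :=
  .mk (fun p ↦ if h : p.2 ∈ C then .inl p.1 else .inr ⟨p.2, h⟩) <| by
    rintro ⟨x, i⟩ ⟨y, j⟩ ⟨hne, hadj⟩ heq
    rw [SimpleGraph.boxProd_adj] at hadj
    by_cases hi : i ∈ C <;> by_cases hj : j ∈ C
    · have hxy : x = y := by simpa [hi, hj] using heq
      exact hadj (.inr ⟨hC hi hj fun hij ↦ hne (Prod.ext hxy hij), hxy⟩)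
    · simp [hi, hj] at heq
    · simp [hi, hj] at heq
    · have hij : i = j := by simpa [hi, hj] using heq
      exact hadj (.inl ⟨fun hxy ↦ hne (Prod.ext hxy hij), hij⟩)

theorem gtheta_one_boxProd_top_le [Fintype V] [DecidableEq V] [Fintype α] [DecidableEq α]
    (hC : G.IsClique C) :
    gtheta 1 ((⊤ : SimpleGraph α) □ G) ≤ Fintype.card α + (Fintype.card V - #C) := by
  have hcard : Fintype.card {i // i ∉ C} = Fintype.card V - #C := by
    simp [Fintype.card_subtype_compl]
  have := gtheta_le_mul_card_of_compl_coloring (boxProdTopComplColoring (α := α) hC) 1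
  rwa [Fintype.card_sum, hcard, Nat.cast_one, one_mul, Nat.cast_add,
    Nat.cast_sub (card_le_univ C)] at this

end BoxProd

section CliqueWithIsolatedVertices

variable {V W : Type*} [Fintype V] [Fintype W] [DecidableEq W] (f : V ↪ W)

theorem two_mul_card_edgeFinset_map_top [DecidableEq V] :
    2 * #((⊤ : SimpleGraph V).map f).edgeFinset = Fintype.card V * (Fintype.card V - 1) := by
  rw [SimpleGraph.card_edgeFinset_map, SimpleGraph.card_edgeFinset_top_eq_card_choose_two,
    Nat.choose_two_right, Nat.mul_div_cancel' (Nat.even_mul_pred_self _).two_dvd]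

theorem card_sub_le_gtheta_map_top_sub_gtheta_boxProd [Nonempty W] {k : ℕ}
    (hk : k * Fintype.card W = Fintype.card W + Fintype.card V * (Fintype.card V - 1)) :
    (Fintype.card V - k : ℝ) ≤ gtheta k ((⊤ : SimpleGraph V).map f) -
      gtheta 1 ((⊤ : SimpleGraph (Fin k)) □ (⊤ : SimpleGraph V).map f) := by
  classical
  have hclique : ((⊤ : SimpleGraph V).map f).IsClique (univ.map f : Finset W) := by
    rw [coe_map]
    exact .map (.top _)
  have hlower : (Fintype.card W : ℝ) ≤ gtheta k ((⊤ : SimpleGraph V).map f) :=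
    card_le_gtheta (by rw [hk, two_mul_card_edgeFinset_map_top])
  have hupper := gtheta_one_boxProd_top_le (α := Fin k) hclique
  rw [card_map, card_univ, Fintype.card_fin] at hupper
  linarith

end CliqueWithIsolatedVertices

theorem stmt_12 (M : ℝ) (hM : 0 ≤ M) :
    ∃ (n k : ℕ) (G : SimpleGraph (Fin n)), 0 < k ∧
      M ≤ gtheta k G -
          gtheta 1 (SimpleGraph.boxProd (⊤ : SimpleGraph (Fin k)) G) := by
  obtain ⟨t, ht⟩ := exists_nat_ge M
  let f : Fin (t + 2) ↪ Fin ((t + 2) * (t + 1)) :=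
    Fin.castLEEmb (Nat.le_mul_of_pos_right _ t.succ_pos)
  have hgap := card_sub_le_gtheta_map_top_sub_gtheta_boxProd f (k := 2) (by simp [two_mul])
  refine ⟨_, 2, (⊤ : SimpleGraph (Fin (t + 2))).map f, two_pos, le_trans ?_ hgap⟩
  simpa using ht
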